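/- arXiv:2506.03924 — 2 statements merged into one kernel-verified Lean document; each statement's English description precedes it below -/
import Mathlib

section
/- Let T > 0, c ∈ ℝ, and let f : [0,T] → L²(ℝ) be continuous (with respect to the L² norm). Assume that for every smooth compactly supported h : ℝ → ℝ and every t ∈ [0,T], ⟨f_t, h⟩ = ⟨f_0, h⟩ + c ∫_0^t ⟨f_s, h'⟩ ds, where ⟨g,h⟩ = ∫_ℝ g(u) h(u) du. Then for every t ∈ [0,T], f_t(u) = f_0(u − c t) for almost every u ∈ ℝ; equivalently, ⟨f_t, h⟩ = ∫_ℝ f_0(u − c t) h(u) du for every smooth compactly supported h. -/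
open MeasureTheory

/-!
The argument is the method of characteristics in weak form. Fix `t ∈ [0, T]` and a test function
`h`, and transport `h` backwards along the flow: consider `F s = ⟨f_s, h(· + c (t - s))⟩` on
`[0, t]`. Since translation of a test function is differentiable as an `L²`-valued map
(`hasDerivAt_shiftLp`, a second-order Taylor estimate) and `s ↦ f_s` is continuous in `L²`, a product
rule holds even though `f` itself is not assumed differentiable in `L²`
(`hasDerivAt_inner_of_continuousAt`). It gives
`F' s = c ⟨f_s, h'(· + c (t - s))⟩ - c ⟨f_s, h'(· + c (t - s))⟩ = 0`,
the first term coming from the weak equation with the test function `h(· + c (t - s))` frozen.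
Hence `F t = F 0`, that is `⟨f_t, h⟩ = ⟨f_0, h(· + c t)⟩ = ⟨f_0(· - c t), h⟩`, and the almost
everywhere identity follows because test functions separate locally integrable functions.
-/

lemma hasCompactSupport_shift {h : ℝ → ℝ} (hs : HasCompactSupport h) (a : ℝ) :
    HasCompactSupport (fun u => h (u + a)) :=
  hs.comp_homeomorph (Homeomorph.addRight a)

lemma memLp_shift {h : ℝ → ℝ} (hc : Continuous h) (hs : HasCompactSupport h) (a : ℝ) :
    MemLp (fun u => h (u + a)) 2 (volume : Measure ℝ) :=
  (hc.comp (continuous_id.add continuous_const)).memLp_of_hasCompactSupport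
    (hasCompactSupport_shift hs a)

/-- The translate `h(· + a)` of a continuous compactly supported function, as an element of
`L²(ℝ)`. -/
noncomputable def shiftLp (h : ℝ → ℝ) (hc : Continuous h) (hs : HasCompactSupport h) (a : ℝ) :
    Lp ℝ 2 (volume : Measure ℝ) :=
  (memLp_shift hc hs a).toLp

lemma coeFn_shiftLp {h : ℝ → ℝ} (hc : Continuous h) (hs : HasCompactSupport h) (a : ℝ) :
    shiftLp h hc hs a =ᵐ[volume] fun u => h (u + a) :=
  (memLp_shift hc hs a).coeFn_toLp

lemma inner_shiftLp (g : Lp ℝ 2 (volume : Measure ℝ)) {h : ℝ → ℝ} (hc : Continuous h)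
    (hs : HasCompactSupport h) (a : ℝ) :
    inner ℝ g (shiftLp h hc hs a) = ∫ u, g u * h (u + a) := by
  rw [L2.inner_def]
  refine integral_congr_ae ?_
  filter_upwards [coeFn_shiftLp hc hs a] with u hu
  rw [hu]
  simp [mul_comm]

lemma abs_taylor_remainder_le {h : ℝ → ℝ} (hd : Differentiable ℝ h) {C : NNReal}
    (hC : LipschitzWith C (deriv h)) (y z : ℝ) :
    |h y - h z - (y - z) * deriv h z| ≤ C * |y - z| ^ 2 := by
  have key := Convex.norm_image_sub_le_of_norm_hasDerivWithin_le (s := Set.uIcc z y)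
    (f := fun w => h w - w * deriv h z) (f' := fun w => deriv h w - deriv h z)
    (C := C * |y - z|) (x := z) (y := y)
    (fun w _ => by
      have := ((hd w).hasDerivAt.sub
        ((hasDerivAt_id w).mul_const (deriv h z))).hasDerivWithinAt (s := Set.uIcc z y)
      rw [one_mul] at this
      exact this)
    (fun w hw => by
      refine (hC.norm_sub_le w z).trans ?_
      exact mul_le_mul_of_nonneg_left (Set.abs_sub_left_of_mem_uIcc hw) C.2)
    (convex_uIcc z y) Set.left_mem_uIcc Set.right_mem_uIcc
  simp only [Real.norm_eq_abs] at key
  calc |h y - h z - (y - z) * deriv h z|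
      = |h y - y * deriv h z - (h z - z * deriv h z)| := by congr 1; ring
    _ ≤ _ := key
    _ = _ := by ring

/-- Translation of a test function is differentiable in `L²`, not just pointwise: for `|b - a| ≤ 1`
the first-order remainder is at most a constant times `|b - a|²`, and it is supported in a fixed
ball. -/
lemma hasDerivAt_shiftLp {h : ℝ → ℝ} (hd : ContDiff ℝ (⊤ : ℕ∞) h) (hs : HasCompactSupport h)
    (hc' : Continuous (deriv h)) (a : ℝ) :
    HasDerivAt (shiftLp h hd.continuous hs) (shiftLp (deriv h) hc' hs.deriv a) a := by
  have hd' : ContDiff ℝ 1 (deriv h) := by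
    exact (ContDiff.deriv' (n := (⊤ : ℕ∞)) hd).of_le (by exact_mod_cast le_top)
  obtain ⟨C, hC⟩ := hd'.lipschitzWith_of_hasCompactSupport hs.deriv one_ne_zero
  obtain ⟨R, hR⟩ := hs.isBounded.subset_closedBall (0 : ℝ)
  have hzero : ∀ x, R < |x| → h x = 0 := fun x hx => by
    by_contra hne
    have := hR (subset_tsupport h hne)
    simp only [Metric.mem_closedBall, Real.dist_eq, sub_zero] at this
    linarith
  have hzero' : ∀ x, R < |x| → deriv h x = 0 := fun x hx => by
    by_contra hne
    have := hR (support_deriv_subset hne)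
    simp only [Metric.mem_closedBall, Real.dist_eq, sub_zero] at this
    linarith
  set K : Lp ℝ 2 (volume : Measure ℝ) :=
    indicatorConstLp 2 (measurableSet_closedBall (x := -a) (ε := R + 1))
      (measure_closedBall_lt_top.ne) (1 : ℝ) with hK
  have bound : ∀ b, |b - a| ≤ 1 →
      ‖shiftLp h hd.continuous hs b - shiftLp h hd.continuous hs a
        - (b - a) • shiftLp (deriv h) hc' hs.deriv a‖ ≤ (C * |b - a| ^ 2) * ‖K‖ := by
    intro b hb
    refine Lp.norm_le_mul_norm_of_ae_le_mul ?_
    filter_upwards [Lp.coeFn_sub (shiftLp h hd.continuous hs b - shiftLp h hd.continuous hs a)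
        ((b - a) • shiftLp (deriv h) hc' hs.deriv a),
      Lp.coeFn_sub (shiftLp h hd.continuous hs b) (shiftLp h hd.continuous hs a),
      Lp.coeFn_smul (b - a) (shiftLp (deriv h) hc' hs.deriv a),
      coeFn_shiftLp hd.continuous hs b, coeFn_shiftLp hd.continuous hs a,
      coeFn_shiftLp hc' hs.deriv a,
      indicatorConstLp_coeFn (p := 2) (hs := measurableSet_closedBall (x := -a) (ε := R + 1))
        (hμs := (measure_closedBall_lt_top (μ := (volume : Measure ℝ))).ne) (c := (1 : ℝ))]
      with u h1 h2 h3 h4 h5 h6 h7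
    rw [h1, Pi.sub_apply, h2, Pi.sub_apply, h3, Pi.smul_apply, h4, h5, h6, h7, smul_eq_mul]
    by_cases hu : u ∈ Metric.closedBall (-a) (R + 1)
    · rw [Set.indicator_of_mem hu]
      have := abs_taylor_remainder_le (hd.differentiable (by simp)) hC (u + b) (u + a)
      simpa using this
    · rw [Set.indicator_of_notMem hu]
      have hu' : R + 1 < |u + a| := by
        simpa [Metric.mem_closedBall, Real.dist_eq] using hu
      have hub : R < |u + b| := by
        have := abs_sub_abs_le_abs_sub (u + a) (u + b)
        have e : |u + a - (u + b)| = |b - a| := by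
          rw [abs_sub_comm]; congr 1; ring
        linarith
      rw [hzero _ hub, hzero _ (by linarith), hzero' _ (by linarith)]
      simp
  rw [hasDerivAt_iff_isLittleO]
  have hO : (fun b => shiftLp h hd.continuous hs b - shiftLp h hd.continuous hs a
        - (b - a) • shiftLp (deriv h) hc' hs.deriv a) =O[nhds a] fun b => (b - a) ^ 2 := by
    refine Asymptotics.IsBigO.of_bound (C * ‖K‖) ?_
    filter_upwards [Metric.closedBall_mem_nhds a one_pos] with b hb
    refine (bound b (by simpa [Real.dist_eq] using hb)).trans (le_of_eq ?_)
    rw [norm_pow, Real.norm_eq_abs]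
    ring
  refine hO.trans_isLittleO ?_
  have h0 : Filter.Tendsto (fun b : ℝ => b - a) (nhds a) (nhds 0) := by
    rw [← sub_self a]
    exact (continuous_id.sub continuous_const : Continuous fun b : ℝ => b - a).tendsto a
  exact (Asymptotics.isLittleO_pow_id (𝕜 := ℝ) one_lt_two).comp_tendsto h0

/-- A product rule for `s ↦ ⟨f s, H s⟩` in which `f` only needs to be continuous at `s`, together
with differentiability of the scalar map obtained by freezing the second factor. -/
lemma hasDerivAt_inner_of_continuousAt {E : Type*} [NormedAddCommGroup E] [InnerProductSpace ℝ E]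
    {f H : ℝ → E} {H' : E} {s p : ℝ} (hf : ContinuousAt f s) (hH : HasDerivAt H H' s)
    (hp : HasDerivAt (fun r => inner ℝ (f r) (H s)) p s) :
    HasDerivAt (fun r => inner ℝ (f r) (H r)) (p + inner ℝ (f s) H') s := by
  rw [hasDerivAt_iff_tendsto_slope] at hp hH ⊢
  have h1 : Filter.Tendsto (fun r => inner ℝ (f r) (slope H s r)) (nhdsWithin s {s}ᶜ)
      (nhds (inner ℝ (f s) H')) :=
    (hf.tendsto.mono_left nhdsWithin_le_nhds).inner hH
  refine (hp.add h1).congr fun r => ?_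
  simp only [slope_def_module, inner_smul_right, inner_sub_right, smul_eq_mul]
  ring

/-- The weak equation tested against the backward-transported test function `h(· + c t)`. -/
lemma inner_eq_of_weak {T c : ℝ}
    {f : ℝ → Lp ℝ 2 (volume : Measure ℝ)}
    (hf : ContinuousOn f (Set.Icc 0 T))
    (hweak : ∀ h : ℝ → ℝ, ContDiff ℝ (⊤ : ℕ∞) h → HasCompactSupport h →
      ∀ t ∈ Set.Icc (0 : ℝ) T,
        ∫ u, f t u * h u
          = (∫ u, f 0 u * h u) + c * ∫ s in (0 : ℝ)..t, ∫ u, f s u * deriv h u)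
    {t : ℝ} (ht : t ∈ Set.Icc (0 : ℝ) T)
    {h : ℝ → ℝ} (hd : ContDiff ℝ (⊤ : ℕ∞) h) (hs : HasCompactSupport h) :
    ∫ u, f t u * h u = ∫ u, f 0 u * h (u + c * t) := by
  have hc' : Continuous (deriv h) := hd.continuous_deriv (by simp)
  rcases ht.1.eq_or_lt with rfl | ht0
  · simp
  set H : ℝ → Lp ℝ 2 (volume : Measure ℝ) :=
    fun s => shiftLp h hd.continuous hs (c * (t - s)) with hH
  have hHd : ∀ s, HasDerivAt H (-c • shiftLp (deriv h) hc' hs.deriv (c * (t - s))) s := by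
    intro s
    have := ((hasDerivAt_id s).const_sub t).const_mul c
    simp only [mul_neg, mul_one] at this
    exact (hasDerivAt_shiftLp hd hs hc' (c * (t - s))).scomp s this
  have hcont : ContinuousOn (fun s => inner ℝ (f s) (H s)) (Set.Icc 0 t) :=
    (hf.mono (Set.Icc_subset_Icc_right ht.2)).inner
      (fun s _ => (hHd s).continuousAt.continuousWithinAt)
  have hderiv : ∀ s ∈ Set.Ioo 0 t, HasDerivAt (fun s => inner ℝ (f s) (H s)) 0 s := by
    intro s hst
    have hsT : s ∈ Set.Ioo 0 T := ⟨hst.1, hst.2.trans_le ht.2⟩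
    have hfs : ContinuousAt f s := hf.continuousAt (Icc_mem_nhds hsT.1 hsT.2)
    set a := c * (t - s) with ha
    set φ : ℝ → ℝ := fun r => inner ℝ (f r) (shiftLp (deriv h) hc' hs.deriv a) with hφ
    have hφc : ContinuousOn φ (Set.Icc 0 T) := hf.inner continuousOn_const
    have hint : HasDerivAt (fun r => ∫ x in (0 : ℝ)..r, φ x) (φ s) s := by
      refine intervalIntegral.integral_hasDerivAt_right ?_ ?_ ?_
      · refine ContinuousOn.intervalIntegrable (hφc.mono ?_)
        rw [Set.uIcc_of_le hsT.1.le]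
        exact Set.Icc_subset_Icc_right hsT.2.le
      · exact ContinuousOn.stronglyMeasurableAtFilter isOpen_Ioo
          (hφc.mono Set.Ioo_subset_Icc_self) s hsT
      · exact hφc.continuousAt (Icc_mem_nhds hsT.1 hsT.2)
    have hp : HasDerivAt (fun r => inner ℝ (f r) (H s)) (c * φ s) s := by
      refine ((hint.const_mul c).const_add (∫ u, f 0 u * h (u + a))).congr_of_eventuallyEq ?_
      filter_upwards [Icc_mem_nhds hsT.1 hsT.2] with r hr
      have hw := hweak (fun u => h (u + a)) (hd.comp (contDiff_id.add contDiff_const))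
        (hasCompactSupport_shift hs a) r hr
      simp only [deriv_comp_add_const] at hw
      simp only [hH, hφ, inner_shiftLp, ← ha]
      exact hw
    have := hasDerivAt_inner_of_continuousAt hfs (hHd s) hp
    have e : c * φ s + inner ℝ (f s) (-c • shiftLp (deriv h) hc' hs.deriv (c * (t - s))) = 0 := by
      rw [inner_smul_right]
      simp only [hφ, ← ha]
      ring
    rwa [e] at this
  obtain ⟨s, -, hs0⟩ := exists_hasDerivAt_eq_slope _ (fun _ => 0) ht0 hcont hderiv
  have hne : t - 0 ≠ 0 := by simpa using ht0.ne'
  rw [eq_div_iff hne, zero_mul, eq_comm, sub_eq_zero] at hs0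
  simpa [hH, inner_shiftLp] using hs0

/-- Lemma 3.1(2), case β < 1: a continuous `L²(ℝ)`-valued weak solution of the
transport equation `∂_t f = -c ∇ f` is the translation flow of its initial profile. -/
theorem stmt_2 (T c : ℝ) (hT : 0 < T)
    (f : ℝ → Lp ℝ 2 (volume : Measure ℝ))
    (hf : ContinuousOn f (Set.Icc 0 T))
    (hweak : ∀ h : ℝ → ℝ, ContDiff ℝ (⊤ : ℕ∞) h → HasCompactSupport h →
      ∀ t ∈ Set.Icc (0 : ℝ) T,
        ∫ u, f t u * h u
          = (∫ u, f 0 u * h u) + c * ∫ s in (0 : ℝ)..t, ∫ u, f s u * deriv h u) :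
    ∀ t ∈ Set.Icc (0 : ℝ) T,
      (∀ᵐ u ∂(volume : Measure ℝ), f t u = f 0 (u - c * t)) ∧
      (∀ h : ℝ → ℝ, ContDiff ℝ (⊤ : ℕ∞) h → HasCompactSupport h →
        ∫ u, f t u * h u = ∫ u, f 0 (u - c * t) * h u) := by
  intro t ht
  have key : ∀ h : ℝ → ℝ, ContDiff ℝ (⊤ : ℕ∞) h → HasCompactSupport h →
      ∫ u, f t u * h u = ∫ u, f 0 (u - c * t) * h u := by
    intro h hd hs
    rw [inner_eq_of_weak hf hweak ht hd hs,
      ← integral_sub_right_eq_self (fun u => f 0 u * h (u + c * t)) (c * t)]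
    simp
  refine ⟨?_, key⟩
  have hshift : MemLp (fun u => f 0 (u - c * t)) 2 (volume : Measure ℝ) :=
    (Lp.memLp (f 0)).comp_measurePreserving (measurePreserving_sub_right volume (c * t))
  refine ae_eq_of_integral_contDiff_smul_eq ((Lp.memLp (f t)).locallyIntegrable one_le_two)
    (hshift.locallyIntegrable one_le_two) fun g hg hgs => ?_
  simpa only [smul_eq_mul, mul_comm] using key g hg hgs
end

section
/- Let T > 0, c ∈ ℝ, and let f : [0,T] → L²(ℝ) be continuous (with respect to the L² norm) with f_0 = 0. Assume that for every smooth compactly supported h : ℝ → ℝ and every t ∈ [0,T], ⟨f_t, h⟩ = ∫_0^t ( (1/2)⟨f_s, h''⟩ + c ⟨f_s, h'⟩ ) ds, where ⟨g,h⟩ = ∫_ℝ g(u) h(u) du. Then f_t = 0 in L²(ℝ) for every t ∈ [0,T]. -/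
/-!
Put `G t = ∫₀ᵗ f s ds`, a Bochner integral in `L²`. The weak equation says that, for each fixed
`t`, `f t = (1/2) (G t)'' - c (G t)'` in the sense of distributions, while `G' = f` in time.
If the right-hand operator is dissipative, then `d/dt ‖G t‖² = 2 ⟪G t, f t⟫ ≤ 0`, so `G = 0` on
`[0, T]`, and the weak equation gives `⟪f t, h⟫ = 0` for every test function `h`.

Dissipativity (`corr_zero_nonpos`) is the statement that `⟪f, g⟫ ≤ 0` whenever
`f = (1/2) g'' - c g'` weakly with `f, g ∈ L²`. It is obtained without mollification or Fourier
transform from the correlation functions `S z = ∫ f (y + z) g y dy` and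
`R z = ∫ g (y + z) g y dy`. Both are continuous, `R` is even and is maximal at `0`. Testing
against all translates of an even `h` and integrating against `g` yields
`∫ h S = (1/2) ∫ h'' R` (`integral_convolution_mul`); the drift disappears because `h'` is odd.
So, informally, `S 0 = R'' 0 / 2 ≤ 0`. Rigorously, if `S > δ > 0` near `0`, take for `h` a smoothed
tent function (`exists_smoothTent`), for which `∫ h'' R` is a second difference of `R` around its
maximum averaged against a bump, and compare with `δ ∫ h = δ ∫ h'' x² / 2`.
-/

open MeasureTheory

/-! ### A smooth tent function -/

/-- A smoothed tent `h` of half-width `a`: its second derivative is the second difference, with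
step `a`, of a bump `φ` supported in `[-ε, ε]`. It is the second difference of a convex even
function `Ψ` with `Ψ'' = φ`, which is affine on `[ε, ∞)`; hence `h` is nonnegative, even and
compactly supported. -/
theorem exists_smoothTent {a ε : ℝ} (ha : 0 < a) (hε : 0 < ε) :
    ∃ φ h : ℝ → ℝ, Continuous φ ∧ HasCompactSupport φ ∧ (∀ x, 0 ≤ φ x) ∧ 0 < ∫ x, φ x ∧
      (∀ x, ε ≤ |x| → φ x = 0) ∧ ContDiff ℝ (⊤ : ℕ∞) h ∧ (∀ x, 0 ≤ h x) ∧
      (∀ x, h (-x) = h x) ∧ (∀ x, a + ε ≤ |x| → h x = 0) ∧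
      ∀ x, deriv (deriv h) x = φ (x + a) + φ (x - a) - 2 * φ x := by
  let φ : ContDiffBump (0 : ℝ) := ⟨ε / 2, ε, by positivity, by linarith⟩
  have hφc : Continuous φ := φ.continuous
  have hφ0 : ∀ x, ε ≤ |x| → φ x = 0 := fun x hx ↦ φ.zero_of_le_dist (by simpa using hx)
  set Φ : ℝ → ℝ := fun x ↦ ∫ t in (0 : ℝ)..x, φ t with hΦ
  have dΦ : ∀ x, HasDerivAt Φ (φ x) x := fun x ↦
    intervalIntegral.integral_hasDerivAt_right (hφc.intervalIntegrable _ _)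
      (hφc.stronglyMeasurableAtFilter _ _) hφc.continuousAt
  have hΦd : deriv Φ = φ := funext fun x ↦ (dΦ x).deriv
  have hΦs : ContDiff ℝ (⊤ : ℕ∞) Φ :=
    contDiff_infty_iff_deriv.2 ⟨fun x ↦ (dΦ x).differentiableAt, hΦd ▸ φ.contDiff⟩
  have hΦc : Continuous Φ := hΦs.continuous
  have hΦm : Monotone Φ := monotone_of_deriv_nonneg (fun x ↦ (dΦ x).differentiableAt)
    fun x ↦ by rw [hΦd]; exact φ.nonneg
  have hΦo : ∀ x, Φ (-x) = -Φ x := by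
    intro x
    have := intervalIntegral.integral_comp_neg (a := 0) (b := x) (fun t ↦ φ t)
    simp only [φ.neg, neg_zero] at this
    simp only [hΦ]
    rw [intervalIntegral.integral_symm, this]
  have hΦe : ∀ x, ε ≤ x → Φ x = Φ ε := by
    intro x hx
    have h1 := intervalIntegral.integral_add_adjacent_intervals
      (hφc.intervalIntegrable (μ := volume) 0 ε) (hφc.intervalIntegrable ε x)
    have h2 : ∫ t in ε..x, φ t = 0 := by
      rw [intervalIntegral.integral_congr (g := fun _ ↦ 0)]
      · simp
      · intro t ht
        rw [Set.uIcc_of_le hx] at ht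
        exact hφ0 t (ht.1.trans (le_abs_self t))
    simp only [hΦ]
    linarith
  set Ψ : ℝ → ℝ := fun x ↦ ∫ t in (0 : ℝ)..x, Φ t with hΨ
  have dΨ : ∀ x, HasDerivAt Ψ (Φ x) x := fun x ↦
    intervalIntegral.integral_hasDerivAt_right (hΦc.intervalIntegrable _ _)
      (hΦc.stronglyMeasurableAtFilter _ _) hΦc.continuousAt
  have hΨd : deriv Ψ = Φ := funext fun x ↦ (dΨ x).deriv
  have hΨs : ContDiff ℝ (⊤ : ℕ∞) Ψ :=
    contDiff_infty_iff_deriv.2 ⟨fun x ↦ (dΨ x).differentiableAt, hΨd ▸ hΦs⟩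
  have hΨe : ∀ x, Ψ (-x) = Ψ x := by
    intro x
    have := intervalIntegral.integral_comp_neg (a := 0) (b := x) (fun t ↦ Φ t)
    simp only [hΦo, neg_zero, intervalIntegral.integral_neg] at this
    simp only [hΨ]
    rw [intervalIntegral.integral_symm, ← this, neg_neg]
  have hΨl : ∀ x, ε ≤ x → Ψ x = Ψ ε + (x - ε) * Φ ε := by
    intro x hx
    have h1 := intervalIntegral.integral_add_adjacent_intervals
      (hΦc.intervalIntegrable (μ := volume) 0 ε) (hΦc.intervalIntegrable ε x)
    have h2 : ∫ t in ε..x, Φ t = (x - ε) * Φ ε := by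
      rw [intervalIntegral.integral_congr (g := fun _ ↦ Φ ε)]
      · simp
      · intro t ht
        rw [Set.uIcc_of_le hx] at ht
        exact hΦe t ht.1
    simp only [hΨ]
    linarith
  have hΨcv : ConvexOn ℝ Set.univ Ψ :=
    Monotone.convexOn_univ_of_deriv (fun x ↦ (dΨ x).differentiableAt) (hΨd ▸ hΦm)
  set h : ℝ → ℝ := fun x ↦ Ψ (x + a) + Ψ (x - a) - 2 * Ψ x with hh
  have dh : ∀ x, HasDerivAt h (Φ (x + a) + Φ (x - a) - 2 * Φ x) x := fun x ↦
    (((dΨ (x + a)).comp_add_const x a).add ((dΨ (x - a)).comp_sub_const x a)).sub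
      ((dΨ x).const_mul 2)
  have hhd : deriv h = fun x ↦ Φ (x + a) + Φ (x - a) - 2 * Φ x := funext fun x ↦ (dh x).deriv
  have heven : ∀ x, h (-x) = h x := by
    intro x
    simp only [hh]
    rw [show -x + a = -(x - a) by ring, show -x - a = -(x + a) by ring, hΨe, hΨe, hΨe]
    ring
  have hpos : ∀ x, a + ε ≤ x → h x = 0 := by
    intro x hx
    simp only [hh]
    rw [hΨl (x + a) (by linarith), hΨl (x - a) (by linarith), hΨl x (by linarith)]
    ring
  refine ⟨φ, h, hφc, φ.hasCompactSupport, fun x ↦ φ.nonneg, φ.integral_pos, hφ0, ?_, ?_, heven,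
    ?_, ?_⟩
  · exact ((hΨs.comp (contDiff_id.add contDiff_const)).add
      (hΨs.comp (contDiff_id.sub contDiff_const))).sub (contDiff_const.mul hΨs)
  · intro x
    have := hΨcv.2 (Set.mem_univ (x + a)) (Set.mem_univ (x - a)) (show (0 : ℝ) ≤ 1 / 2 by norm_num)
      (show (0 : ℝ) ≤ 1 / 2 by norm_num) (by norm_num)
    simp only [smul_eq_mul] at this
    rw [show 1 / 2 * (x + a) + 1 / 2 * (x - a) = x by ring] at this
    simp only [hh]
    linarith
  · intro x hx
    rcases le_abs.1 hx with h1 | h1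
    · exact hpos x h1
    · rw [← heven]; exact hpos _ h1
  · intro x
    rw [hhd]
    exact ((((dΦ (x + a)).comp_add_const x a).add ((dΦ (x - a)).comp_sub_const x a)).sub
      ((dΦ x).const_mul 2)).deriv

/-! ### Correlation functions of square-integrable functions -/

/-- The correlation function `z ↦ ∫ p (y + z) q y dy` of `p, q ∈ L²(ℝ)`. The integrand is always
integrable, so the Bochner integral takes no junk value. -/
noncomputable def corr (p q : Lp ℝ 2 (volume : Measure ℝ)) (z : ℝ) : ℝ :=
  ∫ y, p (y + z) * q y

/-- The correlation is the inner product of `q` with a translate of `p`, and translations act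
continuously on `L²`. -/
theorem continuous_corr (p q : Lp ℝ 2 (volume : Measure ℝ)) : Continuous (corr p q) := by
  have h1 : ∀ z, corr p q z = inner ℝ q (DomAddAct.mk z +ᵥ p) := by
    intro z
    rw [L2.inner_def, corr]
    apply integral_congr_ae
    filter_upwards [DomAddAct.vadd_Lp_ae_eq (DomAddAct.mk z) p] with y hy
    rw [hy]
    simp [add_comm]
  rw [funext h1]
  have : Fact ((2 : ENNReal) ≠ ⊤) := ⟨by norm_num⟩
  have : Continuous (fun z : ℝ ↦ DomAddAct.mk z) := DomAddAct.continuous_mk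
  exact Continuous.inner (f := fun _ ↦ q) continuous_const (this.vadd continuous_const)

theorem corr_neg (g : Lp ℝ 2 (volume : Measure ℝ)) (z : ℝ) : corr g g (-z) = corr g g z := by
  unfold corr
  rw [← integral_add_right_eq_self _ z]
  simp [mul_comm]

/-- An autocorrelation is maximal at the origin. -/
theorem corr_le (g : Lp ℝ 2 (volume : Measure ℝ)) (z : ℝ) : corr g g z ≤ corr g g 0 := by
  have hi : Integrable (fun y ↦ g y * g y) := (Lp.memLp g).integrable_mul (Lp.memLp g)
  have hi' : Integrable (fun y ↦ g (y + z) * g (y + z)) := hi.comp_add_right z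
  have hm : MemLp (fun y ↦ g (y + z)) 2 volume :=
    (Lp.memLp g).comp_measurePreserving (measurePreserving_add_right volume z)
  have h0 : ∫ y, g (y + z) * g (y + z) = ∫ y, g y * g y :=
    integral_add_right_eq_self (fun y ↦ g y * g y) z
  calc corr g g z ≤ ∫ y, (1 / 2) * (g (y + z) * g (y + z) + g y * g y) := by
        refine integral_mono (hm.integrable_mul (Lp.memLp g)) ((hi'.add hi).const_mul _) ?_
        intro y
        have := sq_nonneg (g (y + z) - g y)
        dsimp
        nlinarith
    _ = corr g g 0 := by
        rw [integral_const_mul, integral_add hi' hi, h0, corr]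
        simp
        ring

/-- Pairing `p` with the translates of a kernel `k`, and then with `q`, amounts to integrating `k`
against the correlation of `p` and `q`. This is Fubini's theorem after the shear `x = y + z`. -/
theorem integral_convolution_mul (p q : Lp ℝ 2 (volume : Measure ℝ)) {k : ℝ → ℝ}
    (hk : Continuous k) (hks : HasCompactSupport k) :
    ∫ y, (∫ x, p x * k (x - y)) * q y = ∫ z, k z * corr p q z := by
  have hki : Integrable k := hk.integrable_of_hasCompactSupport hks
  have hp2 : Integrable (fun y ↦ p y * p y) := (Lp.memLp p).integrable_mul (Lp.memLp p)
  have hq2 : Integrable (fun y ↦ q y * q y) := (Lp.memLp q).integrable_mul (Lp.memLp q)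
  have hshear : MeasurePreserving (fun w : ℝ × ℝ ↦ (w.1 + w.2, w.2))
      (volume.prod volume) (volume.prod volume) := by
    have := (Measure.measurePreserving_swap (μ := (volume : Measure ℝ))
      (ν := (volume : Measure ℝ))).comp
      (measurePreserving_prod_add_swap (volume : Measure ℝ) (volume : Measure ℝ))
    convert this using 1
    ext w <;> simp [add_comm]
  have hA : Integrable (fun w : ℝ × ℝ ↦ p (w.1 + w.2) * p (w.1 + w.2) * k w.2)
      (volume.prod volume) :=
    hshear.integrable_comp_of_integrable (hp2.mul_prod hki)
  have hB : Integrable (fun w : ℝ × ℝ ↦ q w.1 * q w.1 * k w.2) (volume.prod volume) :=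
    hq2.mul_prod hki
  -- Domination by `2 |p q| ≤ p² + q²`.
  have hI : Integrable (fun w : ℝ × ℝ ↦ p (w.1 + w.2) * k w.2 * q w.1)
      (volume.prod volume) := by
    refine Integrable.mono' (hA.norm.add hB.norm) ?_ (ae_of_all _ fun w ↦ ?_)
    · have h1 : AEStronglyMeasurable (fun w : ℝ × ℝ ↦ p (w.1 + w.2)) (volume.prod volume) :=
        ((Lp.aestronglyMeasurable p).comp_fst (ν := volume)).comp_measurePreserving hshear
      exact (h1.mul (hk.comp continuous_snd).aestronglyMeasurable).mul
        (Lp.aestronglyMeasurable q).comp_fst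
    · simp only [Pi.add_apply, Real.norm_eq_abs, abs_mul]
      have := sq_nonneg (|p (w.1 + w.2)| - |q w.1|)
      have h3 := abs_nonneg (k w.2)
      have h4 := abs_nonneg (p (w.1 + w.2))
      have h5 := abs_nonneg (q w.1)
      nlinarith [mul_nonneg h3 this, mul_nonneg h3 (mul_nonneg h4 h5)]
  calc ∫ y, (∫ x, p x * k (x - y)) * q y
      = ∫ y, ∫ z, p (y + z) * k z * q y := by
        congr 1 with y
        rw [integral_mul_const, ← integral_add_left_eq_self _ y]
        simp
    _ = ∫ z, ∫ y, p (y + z) * k z * q y := integral_integral_swap hI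
    _ = ∫ z, k z * corr p q z := by
        congr 1 with z
        rw [corr, ← integral_const_mul]
        congr 1 with y
        ring

/-! ### Dissipativity -/

theorem integral_eq_integral_deriv_deriv_mul_sq {h : ℝ → ℝ} (hh : ContDiff ℝ (⊤ : ℕ∞) h)
    (hs : HasCompactSupport h) : ∫ x, h x = ∫ x, deriv (deriv h) x * (x ^ 2 / 2) := by
  have hd := contDiff_infty_iff_deriv.1 hh
  have hdd := contDiff_infty_iff_deriv.1 hd.2
  have hs' := hs.deriv
  have hs'' := hs'.deriv
  have i : ∀ {u v : ℝ → ℝ}, Continuous u → Continuous v → HasCompactSupport v →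
      Integrable (u * v) := fun hu hv hvs ↦
    (hu.mul hv).integrable_of_hasCompactSupport (hvs.mul_left)
  have sq : Continuous (fun x : ℝ ↦ x ^ 2 / 2) := by fun_prop
  have e1 := integral_mul_deriv_eq_deriv_mul_of_integrable (u := fun x : ℝ ↦ x ^ 2 / 2)
    (u' := fun x ↦ x) (v := deriv h) (v' := deriv (deriv h))
    (fun x _ ↦ by simpa using ((hasDerivAt_id x).pow 2).div_const 2)
    (fun x _ ↦ (hdd.1 x).hasDerivAt)
    (i sq hdd.2.continuous hs'') (i continuous_id hd.2.continuous hs')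
    (i sq hd.2.continuous hs')
  have e2 := integral_mul_deriv_eq_deriv_mul_of_integrable (u := fun x : ℝ ↦ x)
    (u' := fun _ ↦ 1) (v := h) (v' := deriv h)
    (fun x _ ↦ hasDerivAt_id x) (fun x _ ↦ (hd.1 x).hasDerivAt)
    (i continuous_id hd.2.continuous hs') (i continuous_const hh.continuous hs)
    (i continuous_id hh.continuous hs)
  simp only [one_mul] at e2
  simp_rw [mul_comm (deriv (deriv h) _)]
  rw [e1, e2, neg_neg]

/-- Dissipativity of the drifted Laplacian on its maximal domain: if
`f = (1/2) g'' - c g'` in the sense of distributions with `f, g ∈ L²(ℝ)`, then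
`∫ f g = corr f g 0 ≤ 0`. -/
theorem corr_zero_nonpos (c : ℝ) (f g : Lp ℝ 2 (volume : Measure ℝ))
    (H : ∀ h : ℝ → ℝ, ContDiff ℝ (⊤ : ℕ∞) h → HasCompactSupport h →
      ∫ u, f u * h u = ∫ u, g u * (1 / 2 * deriv (deriv h) u + c * deriv h u)) :
    corr f g 0 ≤ 0 := by
  by_contra! hpos
  obtain ⟨δ, hδ, hδS⟩ : ∃ δ, 0 < δ ∧ δ < corr f g 0 := exists_between hpos
  set R := corr g g with hR
  have hRc : Continuous R := continuous_corr g g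
  have hSc : Continuous (corr f g) := continuous_corr f g
  obtain ⟨r, hr, hrS⟩ : ∃ r > 0, ∀ z, |z| < r → δ < corr f g z := by
    have := Metric.eventually_nhds_iff.1 (hSc.continuousAt.eventually_const_lt hδS)
    simpa [Real.dist_eq] using this
  set a := r / 2 with ha
  have ha0 : 0 < a := by positivity
  -- Subtracting the parabola makes the second difference of `R / 2` at `0` strictly negative.
  set W : ℝ → ℝ := fun x ↦ R x / 2 - δ * (x ^ 2 / 2) with hW
  have hWc : Continuous W := by fun_prop
  set D : ℝ → ℝ := fun x ↦ W (x + a) + W (x - a) - 2 * W x with hD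
  have hDc : Continuous D := by fun_prop
  have hD0 : D 0 < -(δ * a ^ 2 / 2) := by
    have h1 : R (-a) = R a := corr_neg g a
    have h2 : R a ≤ R 0 := corr_le g a
    have h3 : 0 < δ * a ^ 2 := by positivity
    simp only [hD, hW, zero_add, zero_sub, h1]
    linarith
  obtain ⟨ε, hε, hεr, hεD⟩ : ∃ ε > 0, ε ≤ r / 2 ∧ ∀ x, |x| < ε → D x < -(δ * a ^ 2 / 2) := by
    obtain ⟨ε, hε, h⟩ := Metric.eventually_nhds_iff.1 (hDc.continuousAt.eventually_lt_const hD0)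
    refine ⟨min ε (r / 2), by positivity, min_le_right _ _, fun x hx ↦ h ?_⟩
    simpa [Real.dist_eq] using hx.trans_le (min_le_left _ _)
  obtain ⟨φ, h, hφc, hφs, hφ0, hφi, hφε, hh, hh0, hhe, hhε, hh2⟩ := exists_smoothTent ha0 hε
  have hhs : HasCompactSupport h := by
    refine HasCompactSupport.intro (isCompact_closedBall (0 : ℝ) (a + ε)) fun x hx ↦ hhε x ?_
    simp only [Metric.mem_closedBall, dist_zero_right, Real.norm_eq_abs, not_le] at hx
    exact hx.le
  have hd := contDiff_infty_iff_deriv.1 hh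
  have hdd := contDiff_infty_iff_deriv.1 hd.2
  have hc := hh.continuous
  have hc' := hd.2.continuous
  have hc'' := hdd.2.continuous
  have hs' := hhs.deriv
  have hs'' := hs'.deriv
  have i : ∀ {u v : ℝ → ℝ}, Continuous u → HasCompactSupport u → Continuous v →
      Integrable (fun x ↦ u x * v x) := fun hu hus hv ↦
    (hu.mul hv).integrable_of_hasCompactSupport hus.mul_right
  -- Testing against all translates of `h` and integrating against `g`.
  have key : ∫ z, h z * corr f g z
      = ∫ z, (1 / 2 * deriv (deriv h) z + c * deriv h z) * R z := by
    rw [← integral_convolution_mul f g hc hhs, hR,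
      ← integral_convolution_mul g g (k := fun z ↦ 1 / 2 * deriv (deriv h) z + c * deriv h z)
        (by fun_prop) (HasCompactSupport.add hs''.mul_left hs'.mul_left)]
    congr 1 with y
    congr 1
    have := H (fun x ↦ h (x - y)) (hh.comp (contDiff_id.sub contDiff_const))
      (hhs.comp_homeomorph (Homeomorph.subRight y))
    have d1 : deriv (fun x ↦ h (x - y)) = fun x ↦ deriv h (x - y) :=
      funext fun x ↦ deriv_comp_sub_const ..
    have d2 : deriv (fun x ↦ deriv h (x - y)) = fun x ↦ deriv (deriv h) (x - y) :=
      funext fun x ↦ deriv_comp_sub_const ..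
    rw [d1, d2] at this
    exact this
  have odd : ∫ z, deriv h z * R z = 0 := by
    have h1 : ∀ z, deriv h (-z) = -deriv h z := by
      intro z
      have := deriv_comp_neg (f := h) z
      simp only [hhe] at this
      linarith
    have := integral_neg_eq_self (fun z ↦ deriv h z * R z) volume
    simp only [h1, hR, corr_neg, neg_mul, integral_neg] at this
    simp only [hR]
    linarith
  have key2 : ∫ z, h z * corr f g z = ∫ z, deriv (deriv h) z * (R z / 2) := by
    rw [key]
    have : ∀ z, (1 / 2 * deriv (deriv h) z + c * deriv h z) * R z
        = deriv (deriv h) z * (R z / 2) + c * (deriv h z * R z) := fun z ↦ by ring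
    simp_rw [this]
    rw [integral_add (i hc'' hs'' (by fun_prop)) ((i hc' hs' hRc).const_mul c),
      integral_const_mul, odd]
    simp
  have lower : δ * ∫ z, h z ≤ ∫ z, h z * corr f g z := by
    rw [← integral_const_mul]
    refine integral_mono ((hc.integrable_of_hasCompactSupport hhs).const_mul δ)
      (i hc hhs hSc) fun z ↦ ?_
    dsimp
    rcases lt_or_ge |z| r with hz | hz
    · nlinarith [hrS z hz, hh0 z]
    · rw [hhε z (by linarith)]
      simp
  have nonneg : 0 ≤ ∫ z, deriv (deriv h) z * W z := by
    have : ∀ z, deriv (deriv h) z * W z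
        = deriv (deriv h) z * (R z / 2) - δ * (deriv (deriv h) z * (z ^ 2 / 2)) :=
      fun z ↦ by simp only [hW]; ring
    simp_rw [this]
    rw [integral_sub (i hc'' hs'' (by fun_prop))
      ((i hc'' hs'' (by fun_prop : Continuous fun z : ℝ ↦ z ^ 2 / 2)).const_mul δ),
      integral_const_mul, ← integral_eq_integral_deriv_deriv_mul_sq hh hhs, ← key2]
    linarith
  have shift : ∫ z, deriv (deriv h) z * W z = ∫ z, φ z * D z := by
    have i1 : Integrable (fun z ↦ φ z * W (z - a)) := i hφc hφs (by fun_prop)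
    have i2 : Integrable (fun z ↦ φ z * W (z + a)) := i hφc hφs (by fun_prop)
    have i3 : Integrable (fun z ↦ φ z * W z) := i hφc hφs (by fun_prop)
    have i1' : Integrable (fun z ↦ φ (z + a) * W z) := by simpa using i1.comp_add_right a
    have i2' : Integrable (fun z ↦ φ (z - a) * W z) := by simpa using i2.comp_sub_right a
    have s1 : ∫ z, φ (z + a) * W z = ∫ z, φ z * W (z - a) := by
      simpa using integral_add_right_eq_self (fun z ↦ φ z * W (z - a)) a
    have s2 : ∫ z, φ (z - a) * W z = ∫ z, φ z * W (z + a) := by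
      simpa using integral_sub_right_eq_self (fun z ↦ φ z * W (z + a)) a
    have e1 : ∀ z, deriv (deriv h) z * W z
        = φ (z + a) * W z + φ (z - a) * W z - 2 * (φ z * W z) := fun z ↦ by rw [hh2]; ring
    have e2 : ∀ z, φ z * D z = φ z * W (z - a) + φ z * W (z + a) - 2 * (φ z * W z) :=
      fun z ↦ by simp only [hD]; ring
    simp_rw [e1, e2]
    have lin : ∀ {A B C : ℝ → ℝ}, Integrable A → Integrable B → Integrable C →
        ∫ z, (A z + B z - 2 * C z) = (∫ z, A z) + (∫ z, B z) - 2 * ∫ z, C z := by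
      intro A B C hA hB hC
      rw [← integral_const_mul, ← integral_add hA hB]
      exact integral_sub (hA.add hB) (hC.const_mul 2)
    rw [lin i1' i2' i3, lin i1 i2 i3, s1, s2]
  have neg : ∫ z, φ z * D z ≤ -(δ * a ^ 2 / 2) * ∫ z, φ z := by
    rw [← integral_const_mul]
    refine integral_mono (i hφc hφs hDc)
      ((hφc.integrable_of_hasCompactSupport hφs).const_mul _) fun z ↦ ?_
    dsimp
    rcases lt_or_ge |z| ε with hz | hz
    · nlinarith [hεD z hz, hφ0 z]
    · rw [hφε z hz]
      simp
  have : 0 < δ * a ^ 2 / 2 * ∫ z, φ z := by positivity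
  linarith

/-! ### Uniqueness -/

/-- Uniqueness of continuous `L²(ℝ)`-valued weak solutions of the drifted heat
equation `∂_t f = (1/2)Δf + c∇f`: if the initial datum vanishes, the solution
vanishes identically. -/
theorem stmt_4 (T c : ℝ) (hT : 0 < T)
    (f : ℝ → Lp ℝ 2 (volume : Measure ℝ))
    (hf : ContinuousOn f (Set.Icc 0 T))
    (hf0 : f 0 = 0)
    (hweak : ∀ h : ℝ → ℝ, ContDiff ℝ (⊤ : ℕ∞) h → HasCompactSupport h →
      ∀ t ∈ Set.Icc (0 : ℝ) T,
        ∫ u, f t u * h u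
          = ∫ s in (0 : ℝ)..t,
              ((1 / 2) * ∫ u, f s u * deriv (deriv h) u)
                + c * ∫ u, f s u * deriv h u) :
    ∀ t ∈ Set.Icc (0 : ℝ) T, f t = 0 := by
  set F : ℝ → Lp ℝ 2 (volume : Measure ℝ) := Set.IccExtend hT.le (Set.domRestrict _ f) with hF
  have hFc : Continuous F := hf.domRestrict.Icc_extend'
  have hFf : ∀ t ∈ Set.Icc (0 : ℝ) T, F t = f t := fun t ht ↦
    Set.IccExtend_of_mem hT.le _ ht
  set G : ℝ → Lp ℝ 2 (volume : Measure ℝ) := fun t ↦ ∫ s in (0 : ℝ)..t, F s with hG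
  have dG : ∀ t, HasDerivAt G (F t) t := fun t ↦
    intervalIntegral.integral_hasDerivAt_right (hFc.intervalIntegrable _ _)
      (hFc.stronglyMeasurableAtFilter _ _) hFc.continuousAt
  have hGc : Continuous G := continuous_iff_continuousAt.2 fun t ↦ (dG t).continuousAt
  -- The time integral `G` turns the evolution equation into a stationary one at each time.
  have weakG : ∀ t ∈ Set.Icc (0 : ℝ) T, ∀ h : ℝ → ℝ, ContDiff ℝ (⊤ : ℕ∞) h →
      HasCompactSupport h →
      ∫ u, F t u * h u = ∫ u, G t u * (1 / 2 * deriv (deriv h) u + c * deriv h u) := by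
    intro t ht h hh hhs
    have hd := contDiff_infty_iff_deriv.1 hh
    have hdd := contDiff_infty_iff_deriv.1 hd.2
    have m1 : MemLp (deriv h) 2 volume :=
      hd.2.continuous.memLp_of_hasCompactSupport hhs.deriv
    have m2 : MemLp (deriv (deriv h)) 2 volume :=
      hdd.2.continuous.memLp_of_hasCompactSupport hhs.deriv.deriv
    have m : MemLp (fun u ↦ 1 / 2 * deriv (deriv h) u + c * deriv h u) 2 volume :=
      (m2.const_mul _).add (m1.const_mul _)
    have hin : ∀ p : Lp ℝ 2 (volume : Measure ℝ), innerSL ℝ m.toLp p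
        = ∫ u, p u * (1 / 2 * deriv (deriv h) u + c * deriv h u) := by
      intro p
      rw [innerSL_apply_apply, L2.inner_def]
      apply integral_congr_ae
      filter_upwards [m.coeFn_toLp] with u hu
      rw [hu]
      simp
    rw [← hin, hG, ← ContinuousLinearMap.intervalIntegral_comp_comm _
      (hFc.intervalIntegrable _ _), hFf t ht, hweak h hh hhs t ht]
    refine intervalIntegral.integral_congr fun s hs ↦ ?_
    rw [Set.uIcc_of_le ht.1] at hs
    rw [hin, hFf s ⟨hs.1, hs.2.trans ht.2⟩, ← integral_const_mul, ← integral_const_mul,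
      ← integral_add]
    · congr 1 with u
      ring
    · exact ((Lp.memLp (f s)).integrable_mul m2).const_mul _
    · exact ((Lp.memLp (f s)).integrable_mul m1).const_mul _
  have dE : ∀ t, HasDerivAt (fun t ↦ ‖G t‖ ^ 2) (2 * inner ℝ (G t) (F t)) t := fun t ↦
    (dG t).norm_sq
  have anti : AntitoneOn (fun t ↦ ‖G t‖ ^ 2) (Set.Icc 0 T) := by
    refine antitoneOn_of_deriv_nonpos (convex_Icc 0 T) (by fun_prop)
      (fun t _ ↦ (dE t).differentiableAt.differentiableWithinAt) fun t ht ↦ ?_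
    rw [(dE t).deriv]
    have h1 := corr_zero_nonpos c (F t) (G t) (weakG t (interior_subset ht))
    have h2 : inner ℝ (G t) (F t) = corr (F t) (G t) 0 := by
      rw [L2.inner_def, corr]
      simp
    linarith
  have hG0 : ∀ t ∈ Set.Icc (0 : ℝ) T, G t = 0 := by
    intro t ht
    have h1 := anti (Set.left_mem_Icc.2 hT.le) ht ht.1
    have h2 : G 0 = 0 := intervalIntegral.integral_same
    simp only [h2, norm_zero] at h1
    have h3 : ‖G t‖ ^ 2 = 0 := le_antisymm (by simpa using h1) (by positivity)
    simpa using h3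
  intro t ht
  rw [Lp.eq_zero_iff_ae_eq_zero]
  refine ae_eq_zero_of_integral_contDiff_smul_eq_zero
    ((Lp.memLp (f t)).locallyIntegrable (by norm_num)) fun h hh hhs ↦ ?_
  have h1 := weakG t ht h hh hhs
  rw [hG0 t ht, hFf t ht] at h1
  have h2 : ∫ u, (0 : Lp ℝ 2 (volume : Measure ℝ)) u
      * (1 / 2 * deriv (deriv h) u + c * deriv h u) = 0 := by
    simp
  simp only [smul_eq_mul, mul_comm (h _)]
  rw [h1, h2]
end
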